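/- Let ℓ > 0 and let α : [0, ℓ/4] → ℝ³ be continuous with α(0) ∈ ℝe₃ and α(ℓ/4) ∈ ℝe₁. Then the ℓ-periodic extension g of the glued map is D₂-symmetric, i.e. Rᵢ(g(ψᵢ^ℓ(t))) = g(t) for all t ∈ ℝ and i = 1, 2, 3. -/

import Mathlib

/-!
The rotations `R₁`, `R₂`, `R₃` and the identity form a Klein four-group, and `ψ₂ = ψ₁ ∘ ψ₃`, so it
suffices to treat the two reflections `ψ₁` and `ψ₃` of the parameter. The endpoint conditions say
that `R₁` fixes `α (ℓ/4)` and `R₃` fixes `α 0`, so adjacent pieces of the glued map agree where they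
meet and the four defining formulas hold on the *closed* quarter periods. Since `Rᵢ` is an
involution and `g` is periodic, the symmetry under a reflection need only be checked on the half
period to one side of its centre, that is, on two closed quarters.
-/

noncomputable section

open Real Set

/-- Euclidean three-space. -/
abbrev E3 : Type := EuclideanSpace ℝ (Fin 3)

/-- The vector (a,b,c) ∈ ℝ³ (with the Euclidean norm). -/
def vec3 (a b c : ℝ) : E3 := (WithLp.equiv 2 (Fin 3 → ℝ)).symm ![a, b, c]

/-- The standard basis vectors. -/
def e1 : E3 := vec3 1 0 0
def e2 : E3 := vec3 0 1 0
def e3 : E3 := vec3 0 0 1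

/-- The rotations `R₁, R₂, R₃` by angle π about the coordinate axes `ℝe₁, ℝe₂, ℝe₃`
(indexed by `0, 1, 2 : Fin 3`). -/
def Rot : Fin 3 → E3 → E3 :=
  ![fun x => vec3 (x 0) (-x 1) (-x 2),
    fun x => vec3 (-x 0) (x 1) (-x 2),
    fun x => vec3 (-x 0) (-x 1) (x 2)]

/-- The dihedral parameter transformations `ψ₁^ℓ(t) = ℓ/2 - t`, `ψ₂^ℓ(t) = t - ℓ/2`,
`ψ₃^ℓ(t) = ℓ - t` (indexed by `0, 1, 2 : Fin 3`). -/
def psi (ℓ : ℝ) : Fin 3 → ℝ → ℝ :=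
  ![fun t => ℓ / 2 - t, fun t => t - ℓ / 2, fun t => ℓ - t]

/-- An `ℓ`-periodic curve `γ : ℝ → ℝ³` is D₂-symmetric if `Rᵢ(γ(ψᵢ^ℓ(t))) = γ(t)`
for all `t ∈ ℝ` and `i = 1,2,3`. -/
def DihedralSymmetric (ℓ : ℝ) (γ : ℝ → E3) : Prop :=
  ∀ i : Fin 3, ∀ t : ℝ, Rot i (γ (psi ℓ i t)) = γ t

/-- The `ℓ`-periodic extension of the glued map built from a generating arc `α`:
`g(t) = α(t)` on `[0, ℓ/4)`, `g(t) = Rᵢ(α(ψᵢ^ℓ(t)))` on `[iℓ/4, (i+1)ℓ/4)` for `i = 1,2,3`,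
extended `ℓ`-periodically. -/
def glue (ℓ : ℝ) (α : ℝ → E3) (t : ℝ) : E3 :=
  let s := t - ℓ * (⌊t / ℓ⌋ : ℝ)
  if s < ℓ / 4 then α s
  else if s < ℓ / 2 then Rot 0 (α (psi ℓ 0 s))
  else if s < 3 * ℓ / 4 then Rot 1 (α (psi ℓ 1 s))
  else Rot 2 (α (psi ℓ 2 s))

section Reflection

variable {K X : Type*} [Field K] [LinearOrder K] [IsStrictOrderedRing K] [Archimedean K]

lemma apply_reflection_eq_of_half_period {R : X → X} (hR : Function.Involutive R) {γ : K → X}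
    {ℓ : K} (hγ : Function.Periodic γ ℓ) (hℓ : 0 < ℓ) {a : K}
    (hhalf : ∀ t ∈ Icc (a / 2) ((a + ℓ) / 2), R (γ (a - t)) = γ t) (t : K) :
    R (γ (a - t)) = γ t := by
  have hperiodic : Function.Periodic (fun s ↦ R (γ (a - s)) = γ s) ℓ := fun s ↦ by
    simp only [hγ s, ← sub_sub, hγ.sub_eq]
  obtain ⟨s, ⟨hs₁, hs₂⟩, hts⟩ := hperiodic.exists_mem_Ico hℓ t ((a - ℓ) / 2)
  refine hts.mpr ?_
  rcases le_total (a / 2) s with has | hsa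
  · exact hhalf s ⟨has, by linarith⟩
  · have hreflected := hhalf (a - s) ⟨by linarith, by linarith⟩
    rw [sub_sub_cancel] at hreflected
    rw [← hreflected, hR]

end Reflection

lemma rot_involutive (i : Fin 3) : Function.Involutive (Rot i) := fun x ↦ by
  ext k; fin_cases i <;> fin_cases k <;> simp [Rot, vec3]

lemma rot_zero_rot_two (x : E3) : Rot 0 (Rot 2 x) = Rot 1 x := by
  ext k; fin_cases k <;> simp [Rot, vec3]

lemma rot_two_rot_zero (x : E3) : Rot 2 (Rot 0 x) = Rot 1 x := by
  ext k; fin_cases k <;> simp [Rot, vec3]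

lemma isFixedPt_rot_zero_smul_e1 (c : ℝ) : Function.IsFixedPt (Rot 0) (c • e1) := by
  ext k; fin_cases k <;> simp [Rot, vec3, e1]

lemma isFixedPt_rot_two_smul_e3 (c : ℝ) : Function.IsFixedPt (Rot 2) (c • e3) := by
  ext k; fin_cases k <;> simp [Rot, vec3, e3]

lemma psi_zero_apply (ℓ t : ℝ) : psi ℓ 0 t = ℓ / 2 - t := rfl

lemma psi_one_apply (ℓ t : ℝ) : psi ℓ 1 t = t - ℓ / 2 := rfl

lemma psi_two_apply (ℓ t : ℝ) : psi ℓ 2 t = ℓ - t := rfl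

lemma psi_zero_psi_two (ℓ t : ℝ) : psi ℓ 0 (psi ℓ 2 t) = psi ℓ 1 t := by
  rw [psi_zero_apply, psi_one_apply, psi_two_apply]; ring

lemma dihedralSymmetric_of_zero_of_two {ℓ : ℝ} {γ : ℝ → E3}
    (hzero : ∀ t, Rot 0 (γ (psi ℓ 0 t)) = γ t) (htwo : ∀ t, Rot 2 (γ (psi ℓ 2 t)) = γ t) :
    DihedralSymmetric ℓ γ := by
  have hone (t : ℝ) : Rot 1 (γ (psi ℓ 1 t)) = γ t := by
    rw [← psi_zero_psi_two, ← rot_two_rot_zero, hzero, htwo]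
  exact Fin.forall_fin_succ.mpr ⟨hzero, Fin.forall_fin_two.mpr ⟨hone, htwo⟩⟩

section Glue

variable {ℓ : ℝ} {α : ℝ → E3}

lemma glue_periodic (hℓ : ℓ ≠ 0) (α : ℝ → E3) : Function.Periodic (glue ℓ α) ℓ := fun t ↦ by
  have hrepr : t + ℓ - ℓ * (⌊t / ℓ⌋ + 1) = t - ℓ * ⌊t / ℓ⌋ := by ring
  simp only [glue, add_div, div_self hℓ, Int.floor_add_one, Int.cast_add, Int.cast_one, hrepr]

lemma glue_of_mem_Ico {t : ℝ} (ht : t ∈ Ico 0 ℓ) :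
    glue ℓ α t =
      if t < ℓ / 4 then α t
      else if t < ℓ / 2 then Rot 0 (α (psi ℓ 0 t))
      else if t < 3 * ℓ / 4 then Rot 1 (α (psi ℓ 1 t))
      else Rot 2 (α (psi ℓ 2 t)) := by
  have hℓ : 0 < ℓ := ht.1.trans_lt ht.2
  have hfloor : ⌊t / ℓ⌋ = 0 :=
    Int.floor_eq_zero_iff.mpr ⟨div_nonneg ht.1 hℓ.le, (div_lt_one hℓ).mpr ht.2⟩
  simp only [glue, hfloor, Int.cast_zero, mul_zero, sub_zero]

lemma glue_eqOn_first_quarter (hℓ : 0 < ℓ) (hend : Function.IsFixedPt (Rot 0) (α (ℓ / 4))) :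
    EqOn (glue ℓ α) α (Icc 0 (ℓ / 4)) := by
  rintro t ⟨ht₀, ht⟩
  rw [glue_of_mem_Ico ⟨ht₀, by linarith⟩]
  rcases ht.lt_or_eq with ht | rfl
  · rw [if_pos ht]
  · have hpsi : psi ℓ 0 (ℓ / 4) = ℓ / 4 := by rw [psi_zero_apply]; ring
    rw [if_neg (lt_irrefl _), if_pos (by linarith), hpsi, hend]

lemma glue_eqOn_second_quarter (hℓ : 0 < ℓ) (hstart : Function.IsFixedPt (Rot 2) (α 0)) :
    EqOn (glue ℓ α) (fun t ↦ Rot 0 (α (psi ℓ 0 t))) (Icc (ℓ / 4) (ℓ / 2)) := by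
  rintro t ⟨ht₀, ht⟩
  rw [glue_of_mem_Ico ⟨by linarith, by linarith⟩, if_neg ht₀.not_gt]
  rcases ht.lt_or_eq with ht | rfl
  · rw [if_pos ht]
  · rw [if_neg (lt_irrefl _), if_pos (by linarith)]
    simp only [psi_zero_apply, psi_one_apply, sub_self]
    rw [← rot_zero_rot_two, hstart]

lemma glue_eqOn_third_quarter (hℓ : 0 < ℓ) (hend : Function.IsFixedPt (Rot 0) (α (ℓ / 4))) :
    EqOn (glue ℓ α) (fun t ↦ Rot 1 (α (psi ℓ 1 t))) (Icc (ℓ / 2) (3 * ℓ / 4)) := by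
  rintro t ⟨ht₀, ht⟩
  rw [glue_of_mem_Ico ⟨by linarith, by linarith⟩, if_neg (by linarith), if_neg ht₀.not_gt]
  rcases ht.lt_or_eq with ht | rfl
  · rw [if_pos ht]
  · have hpsi_one : psi ℓ 1 (3 * ℓ / 4) = ℓ / 4 := by rw [psi_one_apply]; ring
    have hpsi_two : psi ℓ 2 (3 * ℓ / 4) = ℓ / 4 := by rw [psi_two_apply]; ring
    simp only [if_neg (lt_irrefl _), hpsi_one, hpsi_two]
    rw [← rot_two_rot_zero, hend]

lemma glue_eqOn_fourth_quarter (hℓ : 0 < ℓ) (hstart : Function.IsFixedPt (Rot 2) (α 0)) :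
    EqOn (glue ℓ α) (fun t ↦ Rot 2 (α (psi ℓ 2 t))) (Icc (3 * ℓ / 4) ℓ) := by
  rintro t ⟨ht₀, ht⟩
  rcases ht.lt_or_eq with ht | rfl
  · rw [glue_of_mem_Ico ⟨by linarith, ht⟩, if_neg (by linarith), if_neg (by linarith),
      if_neg ht₀.not_gt]
  · rw [(glue_periodic hℓ.ne' α).eq, glue_of_mem_Ico ⟨le_rfl, hℓ⟩, if_pos (by linarith)]
    simp only [psi_two_apply, sub_self]
    rw [hstart]

lemma rot_zero_glue_psi_zero (hℓ : 0 < ℓ) (hstart : Function.IsFixedPt (Rot 2) (α 0))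
    (hend : Function.IsFixedPt (Rot 0) (α (ℓ / 4))) (t : ℝ) :
    Rot 0 (glue ℓ α (psi ℓ 0 t)) = glue ℓ α t := by
  have hhalf : ∀ s ∈ Icc (ℓ / 2 / 2) ((ℓ / 2 + ℓ) / 2),
      Rot 0 (glue ℓ α (psi ℓ 0 s)) = glue ℓ α s := by
    rintro s ⟨hs₁, hs₂⟩
    rcases le_total s (ℓ / 2) with hs | hs
    · have hmem : psi ℓ 0 s ∈ Icc 0 (ℓ / 4) := by
        rw [psi_zero_apply]; constructor <;> linarith
      rw [glue_eqOn_first_quarter hℓ hend hmem,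
        glue_eqOn_second_quarter hℓ hstart ⟨by linarith, hs⟩]
    · have hmem : psi ℓ 0 s + ℓ ∈ Icc (3 * ℓ / 4) ℓ := by
        rw [psi_zero_apply]; constructor <;> linarith
      have hpsi_two : psi ℓ 2 (psi ℓ 0 s + ℓ) = psi ℓ 1 s := by
        simp only [psi_zero_apply, psi_one_apply, psi_two_apply]; ring
      rw [← glue_periodic hℓ.ne' α, glue_eqOn_fourth_quarter hℓ hstart hmem,
        glue_eqOn_third_quarter hℓ hend ⟨hs, by linarith⟩]
      simp only [hpsi_two, rot_zero_rot_two]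
  exact apply_reflection_eq_of_half_period (rot_involutive 0) (glue_periodic hℓ.ne' α) hℓ hhalf t

lemma rot_two_glue_psi_two (hℓ : 0 < ℓ) (hstart : Function.IsFixedPt (Rot 2) (α 0))
    (hend : Function.IsFixedPt (Rot 0) (α (ℓ / 4))) (t : ℝ) :
    Rot 2 (glue ℓ α (psi ℓ 2 t)) = glue ℓ α t := by
  have hhalf : ∀ s ∈ Icc (ℓ / 2) ((ℓ + ℓ) / 2),
      Rot 2 (glue ℓ α (psi ℓ 2 s)) = glue ℓ α s := by
    rintro s ⟨hs₁, hs₂⟩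
    rcases le_total s (3 * ℓ / 4) with hs | hs
    · have hmem : psi ℓ 2 s ∈ Icc (ℓ / 4) (ℓ / 2) := by
        rw [psi_two_apply]; constructor <;> linarith
      rw [glue_eqOn_second_quarter hℓ hstart hmem, glue_eqOn_third_quarter hℓ hend ⟨hs₁, hs⟩]
      simp only [psi_zero_psi_two, rot_two_rot_zero]
    · have hmem : psi ℓ 2 s ∈ Icc 0 (ℓ / 4) := by
        rw [psi_two_apply]; constructor <;> linarith
      rw [glue_eqOn_first_quarter hℓ hend hmem,
        glue_eqOn_fourth_quarter hℓ hstart ⟨hs, by linarith⟩]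
  exact apply_reflection_eq_of_half_period (rot_involutive 2) (glue_periodic hℓ.ne' α) hℓ hhalf t

end Glue

theorem glued_curve_dihedralSymmetric_general (ℓ : ℝ) (hℓ : 0 < ℓ) (α : ℝ → E3)
    (h0 : ∃ c : ℝ, α 0 = c • e3) (h1 : ∃ c : ℝ, α (ℓ / 4) = c • e1) :
    DihedralSymmetric ℓ (glue ℓ α) := by
  have hstart : Function.IsFixedPt (Rot 2) (α 0) := by
    obtain ⟨c, hc⟩ := h0
    exact hc ▸ isFixedPt_rot_two_smul_e3 c
  have hend : Function.IsFixedPt (Rot 0) (α (ℓ / 4)) := by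
    obtain ⟨c, hc⟩ := h1
    exact hc ▸ isFixedPt_rot_zero_smul_e1 c
  exact dihedralSymmetric_of_zero_of_two (rot_zero_glue_psi_zero hℓ hstart hend)
    (rot_two_glue_psi_two hℓ hstart hend)

/-- If `α : [0, ℓ/4] → ℝ³` is continuous with `α(0) ∈ ℝe₃` and
`α(ℓ/4) ∈ ℝe₁`, then the `ℓ`-periodic extension `g` of the glued map is D₂-symmetric,
i.e. `Rᵢ(g(ψᵢ^ℓ(t))) = g(t)` for all `t ∈ ℝ` and `i = 1, 2, 3`. -/
theorem glued_curve_dihedralSymmetric (ℓ : ℝ) (hℓ : 0 < ℓ) (α : ℝ → E3)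
    (hcont : ContinuousOn α (Icc 0 (ℓ / 4)))
    (h0 : ∃ c : ℝ, α 0 = c • e3) (h1 : ∃ c : ℝ, α (ℓ / 4) = c • e1) :
    DihedralSymmetric ℓ (glue ℓ α) :=
  glued_curve_dihedralSymmetric_general ℓ hℓ α h0 h1
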